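/- For every n ≥ 1 there is a homeomorphism G from the cyclohedron Cycl_n (the closure of β_n(Δ^n)) onto the closure of γ'_n(Δ^n) in [0,1]^{T_n} × [0,+∞]^{P'_n}, satisfying G ∘ β_n = γ'_n on Δ^n. (Proposition 8.1 of the paper, which moreover asserts the identification is a diffeomorphism of manifolds with corners.) -/

import Mathlib

open scoped ENNReal

/-- The open configuration space `Δ^n = {0 < t 1 < … < t n < 1}` of `n` points in `(0,1)`. -/
def openSimplex (n : ℕ) : Set (Fin n → ℝ) :=
  {t | (∀ i j : Fin n, i < j → t i < t j) ∧ (∀ i, 0 < t i) ∧ ∀ i, t i < 1}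

/-- Extension of a configuration `t : Fin n → ℝ` by the boundary conventions
`t 0 = 0` and `t (n+1) = 1`, giving a function on `Fin (n+2)`. -/
def ext01 {n : ℕ} (t : Fin n → ℝ) : Fin (n + 2) → ℝ :=
  Fin.cons 0 (Fin.snoc t 1)

/-- Extension of a configuration `t : Fin n → ℝ` by the convention `t 0 = 0` only,
giving a function on `Fin (n+1)`. -/
def ext0 {n : ℕ} (t : Fin n → ℝ) : Fin (n + 1) → ℝ :=
  Fin.cons 0 t

/-- The index set `T_n` of triples `0 ≤ i < j < k ≤ n+1`. -/
abbrev TriIdx (n : ℕ) : Type :=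
  {p : Fin (n + 2) × Fin (n + 2) × Fin (n + 2) // p.1 < p.2.1 ∧ p.2.1 < p.2.2}

/-- The map `α_n : Δ^n → [0,1]^{T_n}`, `s_{ijk} = (t_j − t_i)/(t_k − t_i)`
(with `t_0 = 0`, `t_{n+1} = 1`), whose image's closure is the associahedron. -/
noncomputable def alphaMap (n : ℕ) (t : Fin n → ℝ) : TriIdx n → ℝ := fun q =>
  (ext01 t q.1.2.1 - ext01 t q.1.1) / (ext01 t q.1.2.2 - ext01 t q.1.1)

/-- The `n`-dimensional associahedron: the closure of `α_n(Δ^n)`. -/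
noncomputable def Assoc (n : ℕ) : Set (TriIdx n → ℝ) :=
  closure (alphaMap n '' openSimplex n)

/-- The index set `S_n` of triples of pairwise distinct elements of `{0, 1, …, n}`. -/
abbrev TripleIdx (n : ℕ) : Type :=
  {p : Fin (n + 1) × Fin (n + 1) × Fin (n + 1) // p.1 ≠ p.2.1 ∧ p.1 ≠ p.2.2 ∧ p.2.1 ≠ p.2.2}

/-- `s̃_{kℓm}(t) = |sin π(t_ℓ − t_k)| / |sin π(t_m − t_k)| ∈ [0, +∞]`
(with the convention `t_0 = 0`). -/
noncomputable def sTilde (n : ℕ) (t : Fin n → ℝ) : TripleIdx n → ℝ≥0∞ := fun q =>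
  ENNReal.ofReal |Real.sin (Real.pi * (ext0 t q.1.2.1 - ext0 t q.1.1))| /
    ENNReal.ofReal |Real.sin (Real.pi * (ext0 t q.1.2.2 - ext0 t q.1.1))|

/-- The map `β_n : Δ^n → Δ̄^n × [0,+∞]^{S_n}`. -/
noncomputable def betaMap (n : ℕ) (t : Fin n → ℝ) : (Fin n → ℝ) × (TripleIdx n → ℝ≥0∞) :=
  (t, sTilde n t)

/-- The `n`-dimensional cyclohedron: the closure of `β_n(Δ^n)`. -/
noncomputable def Cycl (n : ℕ) : Set ((Fin n → ℝ) × (TripleIdx n → ℝ≥0∞)) :=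
  closure (betaMap n '' openSimplex n)

/-- The index set `P\'_n` of pairs `1 ≤ i < j ≤ n`. -/
abbrev PairIdx' (n : ℕ) : Type := {p : ℕ × ℕ // 1 ≤ p.1 ∧ p.1 < p.2 ∧ p.2 ≤ n}

/-- The map `γ\'_n : Δ^n → [0,1]^{T_n} × [0,+∞]^{P\'_n}`, with components
`s_{ijk}(t) = (t_j − t_i)/(t_k − t_i)` and `r_{ij}(t) = t_i/(1 − t_j)` (with the
conventions `t_0 = 0`, `t_{n+1} = 1`). -/
noncomputable def gammaPrimeMap (n : ℕ) (t : Fin n → ℝ) :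
    (TriIdx n → ℝ) × (PairIdx' n → ℝ≥0∞) :=
  (alphaMap n t,
   fun p => ENNReal.ofReal (ext01 t ⟨p.1.1, by obtain ⟨h1, h2, h3⟩ := p.2; omega⟩) /
     ENNReal.ofReal (1 - ext01 t ⟨p.1.2, by obtain ⟨h1, h2, h3⟩ := p.2; omega⟩))

open Filter Topology

section Extension

variable {X A B : Type*} [TopologicalSpace A] [TopologicalSpace B] {s : Set X}
  {β : X → A} {γ : X → B} {p : A → X} {q : B → X}

/-- If `γ` converges along every filter on `s` along which `β` converges, then `γ ∘ β⁻¹` extends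
continuously to the closure of `β '' s`. -/
theorem exists_continuousOn_extension [T3Space B] (hp : Set.LeftInvOn p β s)
    (h : ∀ F : Filter X, F.NeBot → F ≤ 𝓟 s → ∀ a, Tendsto β F (𝓝 a) → ∃ b, Tendsto γ F (𝓝 b)) :
    ∃ f : A → B, ContinuousOn f (closure (β '' s)) ∧ ∀ x ∈ s, f (β x) = γ x := by
  have key : ∀ a ∈ closure (β '' s), ∃ b, Tendsto (γ ∘ p) (𝓝[β '' s] a) (𝓝 b) := by
    intro a ha
    have : (𝓝[β '' s] a).NeBot := mem_closure_iff_nhdsWithin_neBot.1 ha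
    have hmem : ∀ᶠ y in 𝓝[β '' s] a, y ∈ β '' s := self_mem_nhdsWithin
    obtain ⟨b, hb⟩ := h (map p (𝓝[β '' s] a)) inferInstance
      (by
        rw [le_principal_iff, mem_map]
        filter_upwards [hmem]
        rintro _ ⟨x, hx, rfl⟩
        simpa [hp hx] using hx) a
      (by
        rw [tendsto_map'_iff]
        refine (tendsto_id'.2 (nhdsWithin_le_nhds (a := a) (s := β '' s))).congr' ?_
        filter_upwards [hmem]
        rintro _ ⟨x, hx, rfl⟩
        simp [hp hx])
    exact ⟨b, tendsto_map'_iff.1 hb⟩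
  refine ⟨extendFrom (β '' s) (γ ∘ p), continuousOn_extendFrom le_rfl key, fun x hx => ?_⟩
  have hx' : β x ∈ β '' s := Set.mem_image_of_mem _ hx
  obtain ⟨b, hb⟩ := key _ (subset_closure hx')
  have hb' := hb.mono_left (pure_le_nhdsWithin hx')
  rw [extendFrom_eq (subset_closure hx') hb, ← tendsto_nhds_unique (tendsto_pure_nhds _ _) hb']
  simp [hp hx]

/-- Two injective maps that converge along the same filters have canonically homeomorphic
closures of images. -/
theorem exists_homeomorph_closure_image [T3Space A] [T3Space B]
    (hp : Set.LeftInvOn p β s) (hq : Set.LeftInvOn q γ s)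
    (h₁ : ∀ F : Filter X, F.NeBot → F ≤ 𝓟 s → ∀ a, Tendsto β F (𝓝 a) → ∃ b, Tendsto γ F (𝓝 b))
    (h₂ : ∀ F : Filter X, F.NeBot → F ≤ 𝓟 s → ∀ b, Tendsto γ F (𝓝 b) → ∃ a, Tendsto β F (𝓝 a)) :
    ∃ G : ↥(closure (β '' s)) ≃ₜ ↥(closure (γ '' s)), ∀ x (hx : x ∈ s),
      G ⟨β x, subset_closure (Set.mem_image_of_mem _ hx)⟩ =
        ⟨γ x, subset_closure (Set.mem_image_of_mem _ hx)⟩ := by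
  obtain ⟨f, hf, hfx⟩ := exists_continuousOn_extension hp h₁
  obtain ⟨g, hg, hgx⟩ := exists_continuousOn_extension hq h₂
  have hfm : Set.MapsTo f (closure (β '' s)) (closure (γ '' s)) :=
    Set.MapsTo.closure_of_continuousOn
      (by rintro _ ⟨x, hx, rfl⟩; exact ⟨x, hx, (hfx x hx).symm⟩) hf
  have hgm : Set.MapsTo g (closure (γ '' s)) (closure (β '' s)) :=
    Set.MapsTo.closure_of_continuousOn
      (by rintro _ ⟨x, hx, rfl⟩; exact ⟨x, hx, (hgx x hx).symm⟩) hg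
  have hgf : Set.EqOn (g ∘ f) id (closure (β '' s)) :=
    Set.EqOn.of_subset_closure (s := β '' s)
      (by rintro _ ⟨x, hx, rfl⟩; simp [hfx x hx, hgx x hx])
      (hg.comp hf hfm) continuousOn_id subset_closure le_rfl
  have hfg : Set.EqOn (f ∘ g) id (closure (γ '' s)) :=
    Set.EqOn.of_subset_closure (s := γ '' s)
      (by rintro _ ⟨x, hx, rfl⟩; simp [hfx x hx, hgx x hx])
      (hf.comp hg hgm) continuousOn_id subset_closure le_rfl
  refine ⟨{ toFun := hfm.restrict, invFun := hgm.restrict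
            left_inv := fun x => Subtype.ext (hgf x.2)
            right_inv := fun y => Subtype.ext (hfg y.2)
            continuous_toFun := hf.mapsToRestrict hfm
            continuous_invFun := hg.mapsToRestrict hgm }, fun x hx => Subtype.ext (hfx x hx)⟩

end Extension

/-- Two real functions are comparable along a filter if they are eventually nonnegative, eventually
not both zero, and their quotient converges in `[0, ∞]`. -/
def Comparable {α : Type*} (F : Filter α) (f g : α → ℝ) : Prop :=
  (∀ᶠ x in F, 0 ≤ f x ∧ 0 ≤ g x ∧ 0 < f x + g x) ∧
    ∃ c, Tendsto (fun x => ENNReal.ofReal (f x) / ENNReal.ofReal (g x)) F (𝓝 c)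

namespace Comparable

variable {α : Type*} {F : Filter α} {f g h u v : α → ℝ}

theorem congr (hfg : Comparable F f g) (hu : f =ᶠ[F] u) (hv : g =ᶠ[F] v) : Comparable F u v := by
  obtain ⟨hpos, c, hc⟩ := hfg
  refine ⟨?_, c, hc.congr' ?_⟩
  · filter_upwards [hpos, hu, hv] with x hx hux hvx
    rwa [← hux, ← hvx]
  · filter_upwards [hu, hv] with x hux hvx
    rw [hux, hvx]

theorem symm (hfg : Comparable F f g) : Comparable F g f := by
  obtain ⟨hpos, c, hc⟩ := hfg
  refine ⟨?_, c⁻¹, (tendsto_inv_iff.2 hc).congr' ?_⟩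
  · filter_upwards [hpos] with x hx
    exact ⟨hx.2.1, hx.1, by linarith [hx.2.2]⟩
  · filter_upwards [hpos] with x hx
    refine ENNReal.inv_div (Or.inl ENNReal.ofReal_ne_top) ?_
    simp only [ne_eq, ENNReal.ofReal_eq_zero, not_le]
    by_contra! hcon
    linarith [hx.2.2]

theorem refl (hf : ∀ᶠ x in F, 0 < f x) : Comparable F f f := by
  refine ⟨hf.mono fun x hx => ⟨hx.le, hx.le, by linarith⟩, 1, tendsto_const_nhds.congr' ?_⟩
  filter_upwards [hf] with x hx
  exact (ENNReal.div_self (by simpa using hx) ENNReal.ofReal_ne_top).symm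

theorem zero_left (hg : ∀ᶠ x in F, 0 < g x) : Comparable F (fun _ => 0) g :=
  ⟨hg.mono fun x hx => ⟨le_rfl, hx.le, by linarith⟩, 0, by simpa using tendsto_const_nhds⟩

theorem add_left (hf : Comparable F f h) (hg : Comparable F g h) :
    Comparable F (fun x => f x + g x) h := by
  obtain ⟨hfpos, c, hc⟩ := hf
  obtain ⟨hgpos, d, hd⟩ := hg
  refine ⟨?_, c + d, (hc.add hd).congr' ?_⟩
  · filter_upwards [hfpos, hgpos] with x hx hy
    exact ⟨add_nonneg hx.1 hy.1, hx.2.1, by linarith [hx.2.2, hy.1]⟩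
  · filter_upwards [hfpos, hgpos] with x hx hy
    rw [ENNReal.ofReal_add hx.1 hy.1, ENNReal.add_div]

theorem of_tendsto {a b : ℝ} (hpos : ∀ᶠ x in F, 0 ≤ f x ∧ 0 ≤ g x ∧ 0 < f x + g x)
    (hf : Tendsto f F (𝓝 a)) (hg : Tendsto g F (𝓝 b)) (hab : 0 < a ∨ 0 < b) :
    Comparable F f g :=
  ⟨hpos, _, ENNReal.Tendsto.div (ENNReal.tendsto_ofReal hf) (by simpa using hab)
    (ENNReal.tendsto_ofReal hg) (Or.inl ENNReal.ofReal_ne_top)⟩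

theorem of_tendsto_ratio {c : ℝ} (hpos : ∀ᶠ x in F, 0 ≤ f x ∧ 0 ≤ g x ∧ 0 < f x + g x)
    (hc : Tendsto (fun x => f x / (f x + g x)) F (𝓝 c)) : Comparable F f g := by
  have h : Comparable F (fun x => f x / (f x + g x)) (fun x => 1 - f x / (f x + g x)) := by
    refine of_tendsto ?_ hc (hc.const_sub 1) ?_
    · filter_upwards [hpos] with x hx
      refine ⟨div_nonneg hx.1 hx.2.2.le, ?_, by simp⟩
      rw [sub_nonneg, div_le_one hx.2.2]
      linarith [hx.2.1]
    · by_contra! hcon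
      linarith [hcon.1, hcon.2]
  obtain ⟨-, d, hd⟩ := h
  refine ⟨hpos, d, hd.congr' ?_⟩
  filter_upwards [hpos] with x hx
  have h1 : 1 - f x / (f x + g x) = g x / (f x + g x) := by
    field_simp [hx.2.2.ne']
    ring
  rw [h1, ENNReal.ofReal_div_of_pos hx.2.2, ENNReal.ofReal_div_of_pos hx.2.2,
    div_eq_mul_inv (ENNReal.ofReal (f x)) (ENNReal.ofReal (f x + g x)),
    div_eq_mul_inv (ENNReal.ofReal (g x)), ENNReal.mul_div_mul_right]
  · simp
  · simpa using hx.2.2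

theorem exists_tendsto_ratio (hfg : Comparable F f g) :
    ∃ c, Tendsto (fun x => f x / (f x + g x)) F (𝓝 c) := by
  obtain ⟨hpos, c, hc⟩ := hfg.symm
  have hne : (1 + c)⁻¹ ≠ ⊤ := by simp
  refine ⟨_, ((ENNReal.tendsto_toReal hne).comp
    (tendsto_inv_iff.2 (hc.const_add 1))).congr' ?_⟩
  filter_upwards [hpos] with x hx
  rcases hx.2.1.eq_or_lt with h0 | h0
  · have hg : 0 < g x := by linarith [hx.2.2]
    have : ENNReal.ofReal (g x) ≠ 0 := by simpa using hg
    simp [← h0, ENNReal.div_zero this]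
  · have hq : 0 ≤ g x / f x := div_nonneg hx.1 hx.2.1
    simp only [Function.comp_apply]
    rw [← ENNReal.ofReal_div_of_pos h0, ← ENNReal.ofReal_one, ← ENNReal.ofReal_add zero_le_one hq,
      ENNReal.toReal_inv, ENNReal.toReal_ofReal (by positivity)]
    have := hx.2.2
    field_simp

theorem mul_of_tendsto {a b : ℝ} (hfg : Comparable F f g) (hu : Tendsto u F (𝓝 a)) (ha : 0 < a)
    (hv : Tendsto v F (𝓝 b)) (hb : 0 < b) :
    Comparable F (fun x => u x * f x) (fun x => v x * g x) := by
  obtain ⟨hpos, c, hc⟩ := hfg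
  have hu' := hu.eventually (lt_mem_nhds ha)
  have hv' := hv.eventually (lt_mem_nhds hb)
  have hab : ENNReal.ofReal (a / b) ≠ 0 := by simpa using div_pos ha hb
  refine ⟨?_, _, (ENNReal.Tendsto.mul (ENNReal.tendsto_ofReal (hu.div hv hb.ne')) (Or.inl hab) hc
    (Or.inr ENNReal.ofReal_ne_top)).congr' ?_⟩
  · filter_upwards [hpos, hu', hv'] with x hx hux hvx
    have h1 := mul_nonneg hux.le hx.1
    have h2 := mul_nonneg hvx.le hx.2.1
    refine ⟨h1, h2, ?_⟩
    rcases hx.1.eq_or_lt with h0 | h0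
    · have : 0 < v x * g x := mul_pos hvx (by linarith [hx.2.2])
      linarith
    · have : 0 < u x * f x := mul_pos hux h0
      linarith
  · filter_upwards [hu', hv'] with x hux hvx
    simp only [Pi.div_apply]
    rw [ENNReal.ofReal_mul hux.le, ENNReal.ofReal_mul hvx.le, ENNReal.ofReal_div_of_pos hvx,
      ENNReal.mul_div_mul_comm (Or.inl (by simpa using hvx)) (Or.inl ENNReal.ofReal_ne_top)]

/-- Re-bracketing: comparing `f` with `g` and `f + g` with `h` allows to compare `g` with
`f + h`. -/
theorem rebracket (hfg : Comparable F f g) (hh : Comparable F (fun x => f x + g x) h) :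
    Comparable F g (fun x => f x + h x) := by
  obtain ⟨c, hc⟩ := hfg.symm.exists_tendsto_ratio
  obtain ⟨d, hd⟩ := hh.exists_tendsto_ratio
  refine of_tendsto_ratio (c := c * d) ?_ ((hc.mul hd).congr' ?_)
  · filter_upwards [hfg.1, hh.1] with x hx hy
    exact ⟨hx.2.1, add_nonneg hx.1 hy.2.1, by linarith [hy.2.2]⟩
  · filter_upwards [hfg.1, hh.1] with x hx hy
    have h1 : g x + f x ≠ 0 := by linarith [hx.2.2]
    have h2 : f x + g x + h x ≠ 0 := hy.2.2.ne'
    rw [add_comm (f x) (g x)] at h2 ⊢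
    rw [div_mul_div_cancel₀ h1]
    congr 1
    ring

end Comparable

section Sine

open Real

variable {α : Type*} {F : Filter α} {x y z : α → ℝ}

theorem tendsto_pi_mul_sinc (hx : Tendsto x F (𝓝 0)) :
    Tendsto (fun a => π * sinc (π * x a)) F (𝓝 π) := by
  have h : Tendsto (fun a => π * x a) F (𝓝 0) := by simpa using hx.const_mul π
  simpa using ((continuous_sinc.tendsto 0).comp h).const_mul π

theorem sin_pi_mul_eq (r : ℝ) : sin (π * r) = π * sinc (π * r) * r := by
  rcases eq_or_ne r 0 with rfl | hr
  · simp
  · have : π * r ≠ 0 := mul_ne_zero pi_ne_zero hr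
    rw [sinc_of_ne_zero this]
    field_simp

theorem Comparable.sin_of_tendsto_zero (h : Comparable F x y) (hx : Tendsto x F (𝓝 0))
    (hy : Tendsto y F (𝓝 0)) :
    Comparable F (fun a => sin (π * x a)) (fun a => sin (π * y a)) := by
  simp only [sin_pi_mul_eq]
  exact h.mul_of_tendsto (tendsto_pi_mul_sinc hx) pi_pos (tendsto_pi_mul_sinc hy) pi_pos

theorem Comparable.of_sin_of_tendsto_zero
    (h : Comparable F (fun a => sin (π * x a)) (fun a => sin (π * y a)))
    (hx : Tendsto x F (𝓝 0)) (hy : Tendsto y F (𝓝 0)) : Comparable F x y := by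
  have hx' := tendsto_pi_mul_sinc hx
  have hy' := tendsto_pi_mul_sinc hy
  refine (h.mul_of_tendsto (hx'.inv₀ pi_ne_zero) (inv_pos.2 pi_pos)
    (hy'.inv₀ pi_ne_zero) (inv_pos.2 pi_pos)).congr ?_ ?_
  · filter_upwards [hx'.eventually_ne pi_ne_zero] with a ha
    rw [sin_pi_mul_eq, inv_mul_cancel_left₀ ha]
  · filter_upwards [hy'.eventually_ne pi_ne_zero] with a ha
    rw [sin_pi_mul_eq, inv_mul_cancel_left₀ ha]

theorem sin_pi_mul_pos {r : ℝ} (h0 : 0 < r) (h1 : r < 1) : 0 < sin (π * r) :=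
  sin_pos_of_pos_of_lt_pi (by positivity) (by nlinarith [pi_pos])

theorem Comparable.of_sin {a b : ℝ} [F.NeBot] (hpos : ∀ᶠ i in F, 0 < x i ∧ 0 < y i)
    (hx : Tendsto x F (𝓝 a)) (hy : Tendsto y F (𝓝 b))
    (h : Comparable F (fun i => sin (π * x i)) (fun i => sin (π * y i))) : Comparable F x y := by
  have ha : 0 ≤ a := ge_of_tendsto hx (hpos.mono fun i hi => hi.1.le)
  have hb : 0 ≤ b := ge_of_tendsto hy (hpos.mono fun i hi => hi.2.le)
  by_cases hab : 0 < a ∨ 0 < b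
  · exact of_tendsto (hpos.mono fun i hi => ⟨hi.1.le, hi.2.le, add_pos hi.1 hi.2⟩) hx hy hab
  · push Not at hab
    obtain rfl := le_antisymm hab.1 ha
    obtain rfl := le_antisymm hab.2 hb
    exact h.of_sin_of_tendsto_zero hx hy

theorem Comparable.sin {a b : ℝ} [F.NeBot]
    (hpos : ∀ᶠ i in F, 0 < x i ∧ 0 < y i ∧ 0 < z i ∧ x i + y i + z i = 1)
    (hx : Tendsto x F (𝓝 a)) (hy : Tendsto y F (𝓝 b))
    (hxy : Comparable F x y) (hyz : Comparable F y z) (hxz : Comparable F x z) :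
    Comparable F (fun i => sin (π * x i)) (fun i => sin (π * y i)) := by
  have ha : 0 ≤ a := ge_of_tendsto hx (hpos.mono fun i hi => hi.1.le)
  have hb : 0 ≤ b := ge_of_tendsto hy (hpos.mono fun i hi => hi.2.1.le)
  have hab : a + b ≤ 1 := le_of_tendsto (hx.add hy)
    (hpos.mono fun i hi => by linarith [hi.2.2.1, hi.2.2.2])
  have hz : Tendsto z F (𝓝 (1 - a - b)) :=
    ((hx.const_sub 1).sub hy).congr' (hpos.mono fun i hi => by linarith [hi.2.2.2])
  have hcont : ∀ {w : α → ℝ} {c : ℝ}, Tendsto w F (𝓝 c) →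
      Tendsto (fun i => Real.sin (π * w i)) F (𝓝 (Real.sin (π * c))) := fun hw =>
    (continuous_sin.tendsto _).comp (hw.const_mul π)
  have hsin : ∀ᶠ i in F, 0 ≤ Real.sin (π * x i) ∧ 0 ≤ Real.sin (π * y i) ∧
      0 < Real.sin (π * x i) + Real.sin (π * y i) := by
    filter_upwards [hpos] with i hi
    have h1 := sin_pi_mul_pos hi.1 (by linarith [hi.2.1, hi.2.2.1, hi.2.2.2])
    have h2 := sin_pi_mul_pos hi.2.1 (by linarith [hi.1, hi.2.2.1, hi.2.2.2])
    exact ⟨h1.le, h2.le, add_pos h1 h2⟩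
  by_cases hsab : 0 < Real.sin (π * a) ∨ 0 < Real.sin (π * b)
  · exact of_tendsto hsin (hcont hx) (hcont hy) hsab
  have ha' : a = 0 ∨ a = 1 := by
    by_contra! hcon
    exact hsab (Or.inl (sin_pi_mul_pos (ha.lt_of_ne' hcon.1)
      (lt_of_le_of_ne (by linarith) hcon.2)))
  have hb' : b = 0 ∨ b = 1 := by
    by_contra! hcon
    exact hsab (Or.inr (sin_pi_mul_pos (hb.lt_of_ne' hcon.1)
      (lt_of_le_of_ne (by linarith) hcon.2)))
  have hflip : ∀ {r w : ℝ}, r = 1 - w → Real.sin (π * w) = Real.sin (π * r) := by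
    rintro _ w rfl
    rw [mul_sub, mul_one, sin_pi_sub]
  rcases ha' with rfl | rfl <;> rcases hb' with rfl | rfl
  · exact hxy.sin_of_tendsto_zero hx hy
  · have hxz0 : Tendsto (fun i => x i + z i) F (𝓝 0) := by simpa using hx.add hz
    have hc := (add_left (refl (hpos.mono fun i hi => hi.1)) hxz.symm).symm
    exact (hc.sin_of_tendsto_zero hx hxz0).congr (.refl _ _)
      (hpos.mono fun i hi => (hflip (by linarith [hi.2.2.2])).symm)
  · have hyz0 : Tendsto (fun i => y i + z i) F (𝓝 0) := by simpa using hy.add hz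
    have hc := add_left (refl (hpos.mono fun i hi => hi.2.1)) hyz.symm
    exact (hc.sin_of_tendsto_zero hyz0 hy).congr
      (hpos.mono fun i hi => (hflip (by linarith [hi.2.2.2])).symm) (.refl _ _)
  · norm_num at hab

end Sine

section Configurations

variable {n : ℕ} {t : Fin n → ℝ} {F : Filter (Fin n → ℝ)}

@[simp]
theorem ext01_zero (t : Fin n → ℝ) : ext01 t 0 = 0 := rfl

@[simp]
theorem ext01_last (t : Fin n → ℝ) : ext01 t (Fin.last (n + 1)) = 1 := by
  rw [ext01, Fin.cons_snoc_eq_snoc_cons, Fin.snoc_last]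

theorem ext01_castSucc (t : Fin n → ℝ) (i : Fin (n + 1)) : ext01 t i.castSucc = ext0 t i := by
  rw [ext01, Fin.cons_snoc_eq_snoc_cons, Fin.snoc_castSucc, ext0]

@[simp]
theorem ext01_castSucc_succ (t : Fin n → ℝ) (i : Fin n) : ext01 t i.castSucc.succ = t i := by
  rw [ext01, Fin.cons_succ, Fin.snoc_castSucc]

theorem strictMono_ext01 (ht : t ∈ openSimplex n) : StrictMono (ext01 t) := by
  obtain ⟨hlt, hpos, hone⟩ := ht
  intro i j hij
  induction j using Fin.lastCases with
  | last =>
    induction i using Fin.lastCases with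
    | last => exact absurd hij (lt_irrefl _)
    | cast i =>
      rw [ext01_last]
      induction i using Fin.cases with
      | zero => simp
      | succ i => simpa using hone i
  | cast j =>
    induction i using Fin.lastCases with
    | last => exact absurd hij (Fin.le_last _).not_gt
    | cast i =>
      induction j using Fin.cases with
      | zero => exact absurd hij (Fin.zero_le _).not_gt
      | succ j =>
        induction i using Fin.cases with
        | zero => simpa using hpos j
        | succ i => simpa using hlt i j (by simpa using hij)

theorem sin_pi_mul_ext01_sub_pos (ht : t ∈ openSimplex n) {k l : Fin (n + 1)} (hkl : k < l) :
    0 < Real.sin (Real.pi * (ext01 t l.castSucc - ext01 t k.castSucc)) := by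
  have hmono := strictMono_ext01 ht
  have h0 : ext01 t 0 ≤ ext01 t k.castSucc := hmono.monotone (Fin.zero_le _)
  have h1 : ext01 t l.castSucc < ext01 t (Fin.last (n + 1)) := hmono (Fin.castSucc_lt_last _)
  have h2 : ext01 t k.castSucc < ext01 t l.castSucc := hmono (Fin.castSucc_lt_castSucc_iff.2 hkl)
  rw [ext01_zero] at h0
  rw [ext01_last] at h1
  exact sin_pi_mul_pos (by linarith) (by linarith)

/-- The distance, up to a factor of two, of the points `exp (2πi t_k)` and `exp (2πi t_l)`. -/
noncomputable def chord (k l : Fin (n + 1)) (t : Fin n → ℝ) : ℝ :=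
  |Real.sin (Real.pi * (ext0 t l - ext0 t k))|

theorem chord_comm (k l : Fin (n + 1)) : chord (n := n) k l = chord l k := by
  funext t
  rw [chord, chord, ← abs_neg, ← Real.sin_neg, ← mul_neg, neg_sub]

theorem chord_eq (ht : t ∈ openSimplex n) {k l : Fin (n + 1)} (hkl : k < l) :
    chord k l t = Real.sin (Real.pi * (ext01 t l.castSucc - ext01 t k.castSucc)) := by
  rw [chord, ← ext01_castSucc, ← ext01_castSucc, abs_of_pos (sin_pi_mul_ext01_sub_pos ht hkl)]

theorem chord_eq_compl (ht : t ∈ openSimplex n) {k l : Fin (n + 1)} (hkl : k < l) :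
    chord k l t = Real.sin (Real.pi * (1 - ext01 t l.castSucc + ext01 t k.castSucc)) := by
  rw [chord_eq ht hkl, ← Real.sin_pi_sub]
  congr 1
  ring

theorem chord_pos (ht : t ∈ openSimplex n) {k l : Fin (n + 1)} (hkl : k ≠ l) :
    0 < chord k l t := by
  wlog h : k < l generalizing k l
  · rw [chord_comm]
    exact this hkl.symm (lt_of_le_of_ne (not_lt.1 h) hkl.symm)
  rw [chord_eq ht h]
  exact sin_pi_mul_ext01_sub_pos ht h

theorem exists_tendsto_ext01 (h : ∀ i, ∃ c, Tendsto (fun t : Fin n → ℝ => t i) F (𝓝 c))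
    (i : Fin (n + 2)) : ∃ c, Tendsto (fun t => ext01 t i) F (𝓝 c) := by
  induction i using Fin.lastCases with
  | last => exact ⟨1, by simpa using tendsto_const_nhds⟩
  | cast i =>
    induction i using Fin.cases with
    | zero => exact ⟨0, by simpa using tendsto_const_nhds⟩
    | succ i => simpa using h i

/-- The three arcs cut out of the circle of length one by three points of a configuration. -/
theorem eventually_arcs (hF : F ≤ 𝓟 (openSimplex n)) {a b c : Fin (n + 1)} (hab : a < b)
    (hbc : b < c) : ∀ᶠ t in F, 0 < ext01 t b.castSucc - ext01 t a.castSucc ∧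
      0 < ext01 t c.castSucc - ext01 t b.castSucc ∧
      0 < 1 - ext01 t c.castSucc + ext01 t a.castSucc ∧
      ext01 t b.castSucc - ext01 t a.castSucc + (ext01 t c.castSucc - ext01 t b.castSucc) +
        (1 - ext01 t c.castSucc + ext01 t a.castSucc) = 1 := by
  filter_upwards [le_principal_iff.1 hF] with t ht
  have hmono := strictMono_ext01 ht
  have h0 : ext01 t 0 ≤ ext01 t a.castSucc := hmono.monotone (Fin.zero_le _)
  have h1 : ext01 t c.castSucc < ext01 t (Fin.last (n + 1)) := hmono (Fin.castSucc_lt_last _)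
  have h2 : ext01 t a.castSucc < ext01 t b.castSucc := hmono (Fin.castSucc_lt_castSucc_iff.2 hab)
  have h3 : ext01 t b.castSucc < ext01 t c.castSucc := hmono (Fin.castSucc_lt_castSucc_iff.2 hbc)
  rw [ext01_zero] at h0
  rw [ext01_last] at h1
  exact ⟨by linarith, by linarith, by linarith, by ring⟩

theorem exists_tendsto_gammaPrimeMap [F.NeBot] (hF : F ≤ 𝓟 (openSimplex n))
    {a : (Fin n → ℝ) × (TripleIdx n → ℝ≥0∞)} (ha : Tendsto (betaMap n) F (𝓝 a)) :
    ∃ b, Tendsto (gammaPrimeMap n) F (𝓝 b) := by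
  have hX : ∀ᶠ t in F, t ∈ openSimplex n := le_principal_iff.1 hF
  choose lim hlim using exists_tendsto_ext01 (F := F) fun i =>
    ⟨a.1 i, tendsto_pi_nhds.1 ((continuous_fst.tendsto a).comp ha) i⟩
  have hchord : ∀ k l m : Fin (n + 1), k ≠ l → k ≠ m → l ≠ m →
      Comparable F (chord k l) (chord k m) := fun k l m hkl hkm hlm =>
    ⟨hX.mono fun t ht => ⟨abs_nonneg _, abs_nonneg _,
      add_pos (chord_pos ht hkl) (chord_pos ht hkm)⟩,
      _, tendsto_pi_nhds.1 ((continuous_snd.tendsto a).comp ha) ⟨(k, l, m), hkl, hkm, hlm⟩⟩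
  have hxy : ∀ a b c : Fin (n + 1), a < b → b < c →
      Comparable F (fun t => ext01 t b.castSucc - ext01 t a.castSucc)
        (fun t => ext01 t c.castSucc - ext01 t b.castSucc) := fun a b c hab hbc => by
    refine .of_sin ((eventually_arcs hF hab hbc).mono fun t ht => ⟨ht.1, ht.2.1⟩)
      ((hlim _).sub (hlim _)) ((hlim _).sub (hlim _)) ?_
    have h := hchord b a c hab.ne' hbc.ne (hab.trans hbc).ne
    rw [chord_comm b a] at h
    exact h.congr (hX.mono fun t ht => chord_eq ht hab) (hX.mono fun t ht => chord_eq ht hbc)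
  have hyz : ∀ a b c : Fin (n + 1), a < b → b < c →
      Comparable F (fun t => ext01 t c.castSucc - ext01 t b.castSucc)
        (fun t => 1 - ext01 t c.castSucc + ext01 t a.castSucc) := fun a b c hab hbc => by
    refine .of_sin ((eventually_arcs hF hab hbc).mono fun t ht => ⟨ht.2.1, ht.2.2.1⟩)
      ((hlim _).sub (hlim _)) (((hlim _).const_sub 1).add (hlim _)) ?_
    have h := hchord c b a hbc.ne' (hab.trans hbc).ne' hab.ne'
    rw [chord_comm c b, chord_comm c a] at h
    exact h.congr (hX.mono fun t ht => chord_eq ht hbc)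
      (hX.mono fun t ht => chord_eq_compl ht (hab.trans hbc))
  have hxz : ∀ a b c : Fin (n + 1), a < b → b < c →
      Comparable F (fun t => ext01 t b.castSucc - ext01 t a.castSucc)
        (fun t => 1 - ext01 t c.castSucc + ext01 t a.castSucc) := fun a b c hab hbc => by
    refine .of_sin ((eventually_arcs hF hab hbc).mono fun t ht => ⟨ht.1, ht.2.2.1⟩)
      ((hlim _).sub (hlim _)) (((hlim _).const_sub 1).add (hlim _)) ?_
    have h := hchord a b c hab.ne (hab.trans hbc).ne hbc.ne
    exact h.congr (hX.mono fun t ht => chord_eq ht hab)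
      (hX.mono fun t ht => chord_eq_compl ht (hab.trans hbc))
  have hα : ∀ q : TriIdx n, ∃ c, Tendsto (fun t => alphaMap n t q) F (𝓝 c) := by
    rintro ⟨⟨i, j, k⟩, hij, hjk⟩
    simp only [alphaMap]
    obtain ⟨j, rfl⟩ := Fin.exists_castSucc_eq.2 (hjk.trans_le (Fin.le_last _)).ne
    obtain ⟨i, rfl⟩ := Fin.exists_castSucc_eq.2 (hij.trans (Fin.castSucc_lt_last _)).ne
    have hij' : i < j := Fin.castSucc_lt_castSucc_iff.1 hij
    induction k using Fin.lastCases with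
    | last =>
      rcases eq_or_ne i 0 with rfl | hi
      · exact ⟨lim j.castSucc, by simpa using hlim j.castSucc⟩
      · simpa using (hyz 0 i j (Fin.pos_iff_ne_zero.2 hi) hij').exists_tendsto_ratio
    | cast k =>
      simpa using (hxy i j k hij' (Fin.castSucc_lt_castSucc_iff.1 hjk)).exists_tendsto_ratio
  have hr : ∀ p : PairIdx' n, ∃ c, Tendsto (fun t => (gammaPrimeMap n t).2 p) F (𝓝 c) := by
    rintro ⟨⟨i, j⟩, h1, h2, h3⟩
    dsimp only at h1 h2 h3
    obtain ⟨-, c, hc⟩ := hxz 0 ⟨i, by omega⟩ ⟨j, by omega⟩ h1 h2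
    exact ⟨c, by simpa [gammaPrimeMap] using hc⟩
  choose cα hcα using hα
  choose cr hcr using hr
  exact ⟨(cα, cr), (tendsto_pi_nhds.2 hcα).prodMk_nhds (tendsto_pi_nhds.2 hcr)⟩

theorem exists_tendsto_betaMap [F.NeBot] (hF : F ≤ 𝓟 (openSimplex n))
    {b : (TriIdx n → ℝ) × (PairIdx' n → ℝ≥0∞)} (hb : Tendsto (gammaPrimeMap n) F (𝓝 b)) :
    ∃ a, Tendsto (betaMap n) F (𝓝 a) := by
  have hX : ∀ᶠ t in F, t ∈ openSimplex n := le_principal_iff.1 hF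
  have hα : ∀ q : TriIdx n, Tendsto (fun t => alphaMap n t q) F (𝓝 (b.1 q)) :=
    tendsto_pi_nhds.1 ((continuous_fst.tendsto b).comp hb)
  have hcoord : ∀ i, ∃ c, Tendsto (fun t : Fin n → ℝ => t i) F (𝓝 c) := fun i =>
    ⟨_, by simpa [alphaMap] using hα ⟨(0, i.castSucc.succ, Fin.last (n + 1)),
      Fin.succ_pos _, by simp [Fin.lt_def]⟩⟩
  choose lim hlim using exists_tendsto_ext01 hcoord
  have hgap : ∀ i j k : Fin (n + 2), i < j → j < k →
      Comparable F (fun t => ext01 t j - ext01 t i) (fun t => ext01 t k - ext01 t j) :=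
    fun i j k hij hjk => by
      refine .of_tendsto_ratio (hX.mono fun t ht => ?_)
        (by simpa [alphaMap] using hα ⟨(i, j, k), hij, hjk⟩)
      have h1 := strictMono_ext01 ht hij
      have h2 := strictMono_ext01 ht hjk
      exact ⟨by linarith, by linarith, by linarith⟩
  have hends : ∀ i j : Fin (n + 1), i < j →
      Comparable F (fun t => ext01 t i.castSucc) (fun t => 1 - ext01 t j.castSucc) :=
    fun i j hij => by
      have hpos : ∀ᶠ t in F, 0 < 1 - ext01 t j.castSucc := hX.mono fun t ht => by
        simpa using strictMono_ext01 ht (Fin.castSucc_lt_last j)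
      rcases eq_or_ne i 0 with rfl | hi
      · simpa using Comparable.zero_left hpos
      · refine ⟨?_, _, tendsto_pi_nhds.1 ((continuous_snd.tendsto b).comp hb)
          ⟨(i, j), Fin.pos_iff_ne_zero.2 hi, hij, Nat.lt_succ_iff.1 j.2⟩⟩
        filter_upwards [hX, hpos] with t ht hj
        have h0 := (strictMono_ext01 ht).monotone (Fin.zero_le i.castSucc)
        rw [ext01_zero] at h0
        exact ⟨h0, hj.le, by linarith⟩
  have harcs : ∀ a b c : Fin (n + 1), a < b → b < c →
      Comparable F (chord a b) (chord b c) ∧ Comparable F (chord b c) (chord a c) ∧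
        Comparable F (chord a b) (chord a c) := fun a b c hab hbc => by
    have hxy := hgap a.castSucc b.castSucc c.castSucc (Fin.castSucc_lt_castSucc_iff.2 hab)
      (Fin.castSucc_lt_castSucc_iff.2 hbc)
    have hyz : Comparable F (fun t => ext01 t c.castSucc - ext01 t b.castSucc)
        (fun t => 1 - ext01 t c.castSucc + ext01 t a.castSucc) := by
      have h := (hgap b.castSucc c.castSucc (Fin.last (n + 1)) (Fin.castSucc_lt_castSucc_iff.2 hbc)
        (Fin.castSucc_lt_last _)).symm
      simp only [ext01_last] at h
      exact h.rebracket (by simpa using (hends a b hab).symm)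
    have hxz : Comparable F (fun t => ext01 t b.castSucc - ext01 t a.castSucc)
        (fun t => 1 - ext01 t c.castSucc + ext01 t a.castSucc) := by
      have h : Comparable F (fun t => ext01 t a.castSucc)
          (fun t => ext01 t b.castSucc - ext01 t a.castSucc) := by
        rcases eq_or_ne a 0 with rfl | ha
        · simpa using Comparable.zero_left (hX.mono fun t ht => by
            simpa using strictMono_ext01 ht (Fin.castSucc_lt_castSucc_iff.2 hab))
        · simpa using hgap 0 a.castSucc b.castSucc
            (Fin.castSucc_lt_castSucc_iff.2 (Fin.pos_iff_ne_zero.2 ha))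
            (Fin.castSucc_lt_castSucc_iff.2 hab)
      exact (h.rebracket (by simpa using hends b c hbc)).congr (.refl _ _)
        (.of_forall fun t => add_comm _ _)
    have hpos := eventually_arcs hF hab hbc
    have hx := (hlim b.castSucc).sub (hlim a.castSucc)
    have hy := (hlim c.castSucc).sub (hlim b.castSucc)
    have hz := ((hlim c.castSucc).const_sub 1).add (hlim a.castSucc)
    have hab' : ∀ᶠ t in F, Real.sin (Real.pi * (ext01 t b.castSucc - ext01 t a.castSucc)) =
      chord a b t := hX.mono fun t ht => (chord_eq ht hab).symm
    have hbc' : ∀ᶠ t in F, Real.sin (Real.pi * (ext01 t c.castSucc - ext01 t b.castSucc)) =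
      chord b c t := hX.mono fun t ht => (chord_eq ht hbc).symm
    have hac' : ∀ᶠ t in F, Real.sin (Real.pi * (1 - ext01 t c.castSucc + ext01 t a.castSucc)) =
      chord a c t := hX.mono fun t ht => (chord_eq_compl ht (hab.trans hbc)).symm
    refine ⟨(Comparable.sin hpos hx hy hxy hyz hxz).congr hab' hbc',
      (Comparable.sin (hpos.mono fun t ht => ⟨ht.2.1, ht.2.2.1, ht.1, ?_⟩) hy hz hyz hxz.symm
        hxy.symm).congr hbc' hac',
      (Comparable.sin (hpos.mono fun t ht => ⟨ht.1, ht.2.2.1, ht.2.1, ?_⟩) hx hz hxz hyz.symm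
        hxy).congr hab' hac'⟩ <;> linarith [ht.2.2.2]
  have hs : ∀ q : TripleIdx n, ∃ c, Tendsto (fun t => sTilde n t q) F (𝓝 c) := by
    rintro ⟨⟨k, l, m⟩, hkl, hkm, hlm⟩
    dsimp only at hkl hkm hlm
    suffices h : Comparable F (chord k l) (chord k m) from h.2
    wlog hlt : l < m generalizing l m
    · exact (this m l hkm hkl hlm.symm (lt_of_le_of_ne (not_lt.1 hlt) hlm.symm)).symm
    rcases hkl.lt_or_gt with h | h
    · exact (harcs k l m h hlt).2.2
    · rcases hkm.lt_or_gt with h' | h'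
      · rw [chord_comm k l]
        exact (harcs l k m h h').1
      · rw [chord_comm k l, chord_comm k m]
        exact (harcs l m k hlt h').2.1.symm
  choose ct hct using hcoord
  choose cs hcs using hs
  exact ⟨(ct, cs), (tendsto_pi_nhds.2 hct).prodMk_nhds (tendsto_pi_nhds.2 hcs)⟩

end Configurations

/-- **Proposition 8.1.** The cyclohedron `Cycl_n` (the closure of `β_n(Δ^n)`) is
homeomorphic to the closure of `γ\'_n(Δ^n)` in `[0,1]^{T_n} × [0,+∞]^{P\'_n}`, by a
homeomorphism commuting with the two embeddings of `Δ^n`. -/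
theorem cyclohedron_homeomorph_closure_gammaPrime (n : ℕ) (hn : 1 ≤ n) :
    ∃ G : ↥(Cycl n) ≃ₜ ↥(closure (gammaPrimeMap n '' openSimplex n)),
      ∀ t (ht : t ∈ openSimplex n),
        G ⟨betaMap n t, subset_closure (Set.mem_image_of_mem _ ht)⟩ =
          ⟨gammaPrimeMap n t, subset_closure (Set.mem_image_of_mem _ ht)⟩ := by
  refine exists_homeomorph_closure_image (p := Prod.fst)
    (q := fun b i => b.1 ⟨(0, i.castSucc.succ, Fin.last (n + 1)),
      Fin.succ_pos _, by simp [Fin.lt_def]⟩) (fun _ _ => rfl) (fun t _ => ?_)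
    (fun F _ hF _ ha => exists_tendsto_gammaPrimeMap hF ha)
    (fun F _ hF _ hb => exists_tendsto_betaMap hF hb)
  funext i
  simp [gammaPrimeMap, alphaMap]
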